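/- Let β = 1 and h = 0 (the critical Curie–Weiss model). Let ξ be a real random variable with density f_1(x) = exp(−x⁴/12) / ∫_ℝ exp(−y⁴/12) dy, fix 0 < δ < 1/20, set ξ_N = ξ 1{|ξ| ≤ N^δ}, and define ν_N(σ) = E[∏_{i=1}^N ½(1 + ξ_N σ_i / N^{1/4})] for σ ∈ {−1,+1}^N. Then H(μ_N | ν_N) → 0 and H(ν_N | μ_N) → 0 as N → ∞. -/

import Mathlib

open Filter Real MeasureTheory

/-- Relative entropy (Kullback–Leibler divergence) between two probability mass
functions on a finite set. -/
noncomputable def relEnt {α : Type*} [Fintype α] (rho pion : α → ℝ) : ℝ :=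
  ∑ x, rho x * Real.log (rho x / pion x)

/-!
Both measures are mixtures of product measures over the law of the common spin mean `m`. With
`M = N ^ (1 / 4)`, the Hubbard–Stratonovich transform gives `m = tanh (s / M)` for the
Curie–Weiss measure, where `s` has density proportional to `exp (M⁴ φ(s / M))` with
`φ(y) = log cosh y - y² / 2`; for `ν_N` one has `m = ξ_N / M`.

Put both laws in the coordinate `t = M m`. Since `φ(y) = -tanh⁴ y / 12 + O(tanh⁶ y)`, their
densities differ by a factor `1 + o(1)` as long as `0 < |t| ≤ M ^ κ` with `κ < 1 / 3`, because then
`M⁴ (t / M)⁶ → 0`. Outside this bulk both laws have mass `o(1 / N)`, while the log-likelihood ratio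
of the mixtures is at most `O(N)`: each is bounded below by `4⁻ᴺ / 2`, as half of its mass sits on
`|m| ≤ 1 / 2`. All of this is symmetric in the two measures.
-/

open Topology Set

section RelativeEntropy

variable {α : Type*} [Fintype α]

lemma relEnt_nonneg {ρ q : α → ℝ} (hρ : ∀ x, 0 ≤ ρ x) (hq : ∀ x, 0 < q x)
    (hsum : ∑ x, q x ≤ ∑ x, ρ x) : 0 ≤ relEnt ρ q := by
  have h_term (x : α) : ρ x - q x ≤ ρ x * log (ρ x / q x) := by
    have h_kl := mul_nonneg (hq x).le
      (InformationTheory.klFun_nonneg (div_nonneg (hρ x) (hq x).le))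
    have h_cancel : q x * (ρ x / q x) = ρ x := mul_div_cancel₀ _ (hq x).ne'
    rw [InformationTheory.klFun_apply, mul_sub, mul_add, mul_one, ← mul_assoc, h_cancel] at h_kl
    linarith
  calc 0 ≤ ∑ x, (ρ x - q x) := by rw [Finset.sum_sub_distrib]; linarith
    _ ≤ relEnt ρ q := Finset.sum_le_sum fun x _ ↦ h_term x

lemma add_mul_log_div_le {a b q A K : ℝ} (ha : 0 ≤ a) (hb : 0 ≤ b) (hA : 0 < A) (hK : 0 < K)
    (ha_le : a ≤ A * q) (hab_le : a + b ≤ K * q) :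
    (a + b) * log ((a + b) / q) ≤ log A * a + (1 + log K) * b := by
  rcases (add_nonneg ha hb).eq_or_lt with h_zero | h_pos
  · obtain ⟨rfl, rfl⟩ : a = 0 ∧ b = 0 := ⟨by linarith, by linarith⟩
    simp
  have hq : 0 < q := pos_of_mul_pos_right (h_pos.trans_le hab_le) hK.le
  have h_log_A : log ((a + b) / q) ≤ log A + ((a + b) / (A * q) - 1) := by
    have h_factor : (a + b) / q = A * ((a + b) / (A * q)) := by field_simp
    rw [h_factor, log_mul hA.ne' (by positivity)]
    linarith [log_le_sub_one_of_pos (show 0 < (a + b) / (A * q) by positivity)]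
  have h_log_K : log ((a + b) / q) ≤ log K := log_le_log (by positivity) ((div_le_iff₀ hq).2 hab_le)
  have h_excess : a * ((a + b) / (A * q) - 1) ≤ b := by
    have h_ratio : a / (A * q) ≤ 1 := (div_le_one (by positivity)).2 ha_le
    calc a * ((a + b) / (A * q) - 1) = a / (A * q) * (a + b) - a := by ring
      _ ≤ 1 * (a + b) - a := by gcongr
      _ = b := by ring
  nlinarith [mul_le_mul_of_nonneg_left h_log_A ha, mul_le_mul_of_nonneg_left h_log_K hb]

lemma relEnt_add_le {a b q : α → ℝ} {A K : ℝ} (ha : ∀ x, 0 ≤ a x) (hb : ∀ x, 0 ≤ b x)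
    (hA : 0 < A) (hK : 0 < K) (ha_le : ∀ x, a x ≤ A * q x) (hab_le : ∀ x, a x + b x ≤ K * q x) :
    relEnt (a + b) q ≤ log A * ∑ x, a x + (1 + log K) * ∑ x, b x := by
  rw [Finset.mul_sum, Finset.mul_sum, ← Finset.sum_add_distrib]
  exact Finset.sum_le_sum fun x _ ↦
    add_mul_log_div_le (ha x) (hb x) hA hK (ha_le x) (hab_le x)

end RelativeEntropy

section Mixture

variable {α Θ : Type*} [MeasurableSpace Θ]

/-- The mixture of the functions `p · θ` over the law `P` of the parameter `θ`. -/
noncomputable def mixture (p : α → Θ → ℝ) (P : Measure Θ) (x : α) : ℝ := ∫ θ, p x θ ∂P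

/-- `p · θ` is a probability mass function for `P`-almost every parameter `θ`. -/
structure IsRandomPMF [Fintype α] (p : α → Θ → ℝ) (P : Measure Θ) : Prop where
  measurable (x : α) : Measurable (p x)
  ae_nonneg : ∀ᵐ θ ∂P, ∀ x, 0 ≤ p x θ
  ae_sum_eq_one : ∀ᵐ θ ∂P, ∑ x, p x θ = 1

namespace IsRandomPMF

variable [Fintype α] {p : α → Θ → ℝ} {P Q : Measure Θ}

lemma ae_nonneg_apply (h : IsRandomPMF p P) (x : α) : 0 ≤ᵐ[P] p x := by
  filter_upwards [h.ae_nonneg] with θ hθ using hθ x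

lemma integrable [IsFiniteMeasure P] (h : IsRandomPMF p P) (x : α) : Integrable (p x) P := by
  refine Integrable.of_bound (h.measurable x).aestronglyMeasurable 1 ?_
  filter_upwards [h.ae_nonneg, h.ae_sum_eq_one] with θ h_nonneg h_sum
  rw [Real.norm_of_nonneg (h_nonneg x), ← h_sum]
  exact Finset.single_le_sum (f := fun x ↦ p x θ) (fun y _ ↦ h_nonneg y) (Finset.mem_univ x)

lemma restrict (h : IsRandomPMF p P) (S : Set Θ) : IsRandomPMF p (P.restrict S) where
  measurable := h.measurable
  ae_nonneg := ae_restrict_of_ae h.ae_nonneg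
  ae_sum_eq_one := ae_restrict_of_ae h.ae_sum_eq_one

lemma mixture_nonneg (h : IsRandomPMF p P) (x : α) : 0 ≤ mixture p P x :=
  integral_nonneg_of_ae (h.ae_nonneg_apply x)

lemma sum_mixture [IsFiniteMeasure P] (h : IsRandomPMF p P) :
    ∑ x, mixture p P x = P.real univ := by
  simp only [mixture]
  rw [← integral_finsetSum _ fun x _ ↦ h.integrable x, integral_congr_ae h.ae_sum_eq_one]
  simp

lemma mixture_restrict_le [IsFiniteMeasure Q] (hQ : IsRandomPMF p Q)
    {S : Set Θ} {A : ℝ} (hA : 0 ≤ A) (h_le : P.restrict S ≤ ENNReal.ofReal A • Q) (x : α) :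
    mixture p (P.restrict S) x ≤ A * mixture p Q x := by
  calc mixture p (P.restrict S) x ≤ ∫ θ, p x θ ∂(ENNReal.ofReal A • Q) :=
        integral_mono_measure h_le (Measure.ae_smul_measure (hQ.ae_nonneg_apply x) _)
          ((hQ.integrable x).smul_measure ENNReal.ofReal_ne_top)
    _ = A * mixture p Q x := by
        rw [integral_smul_measure, ENNReal.toReal_ofReal hA, smul_eq_mul, mixture]

lemma relEnt_mixture_le [IsFiniteMeasure P] [IsFiniteMeasure Q] (hP : IsRandomPMF p P)
    (hQ : IsRandomPMF p Q) {S : Set Θ} (hS : MeasurableSet S) {A K : ℝ} (hA : 0 < A) (hK : 0 < K)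
    (h_le : P.restrict S ≤ ENNReal.ofReal A • Q) (hK_le : ∀ x, mixture p P x ≤ K * mixture p Q x) :
    relEnt (mixture p P) (mixture p Q) ≤ log A * P.real S + (1 + log K) * P.real Sᶜ := by
  have h_split : mixture p P = mixture p (P.restrict S) + mixture p (P.restrict Sᶜ) := by
    ext x
    exact (integral_add_compl hS (hP.integrable x)).symm
  have h_bound := relEnt_add_le (hP.restrict S).mixture_nonneg (hP.restrict Sᶜ).mixture_nonneg
    hA hK (hQ.mixture_restrict_le hA.le h_le) fun x ↦ (congrFun h_split x).symm.trans_le (hK_le x)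
  rwa [← h_split, (hP.restrict S).sum_mixture, (hP.restrict Sᶜ).sum_mixture,
    measureReal_restrict_apply_univ, measureReal_restrict_apply_univ] at h_bound

end IsRandomPMF

end Mixture

section SpinMixture

variable {ι : Type*} [Fintype ι]

/-- The `±1` spin encoded by a Boolean. -/
def boolSpin (b : Bool) : ℝ := if b then 1 else -1

/-- The probability of the configuration `σ` when the spins are independent with mean `m`. -/
noncomputable def spinProduct (σ : ι → Bool) (m : ℝ) : ℝ :=
  ∏ i, 1 / 2 * (1 + m * boolSpin (σ i))

/-- `P` is a probability measure carried by `[-1, 1]`, the possible means of a spin. -/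
structure IsMeanLaw (P : Measure ℝ) : Prop where
  isProbabilityMeasure : IsProbabilityMeasure P
  ae_abs_le_one : ∀ᵐ m ∂P, |m| ≤ 1

lemma abs_boolSpin (b : Bool) : |boolSpin b| = 1 := by
  cases b <;> simp [boolSpin]

lemma abs_mul_boolSpin (m : ℝ) (b : Bool) : |m * boolSpin b| = |m| := by
  rw [abs_mul, abs_boolSpin, mul_one]

lemma continuous_spinProduct (σ : ι → Bool) : Continuous (spinProduct σ) := by
  unfold spinProduct
  fun_prop

lemma spinProduct_nonneg (σ : ι → Bool) {m : ℝ} (hm : |m| ≤ 1) : 0 ≤ spinProduct σ m :=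
  Finset.prod_nonneg fun i _ ↦ by
    linarith [neg_le_of_abs_le ((abs_mul_boolSpin m (σ i)).trans_le hm)]

lemma sum_spinProduct [DecidableEq ι] (m : ℝ) : ∑ σ : ι → Bool, spinProduct σ m = 1 := by
  simp only [spinProduct, ← Fintype.piFinset_univ]
  rw [← Finset.prod_univ_sum (fun _ ↦ Finset.univ) fun _ b ↦ 1 / 2 * (1 + m * boolSpin b)]
  exact Finset.prod_eq_one fun i _ ↦ by
    simp only [Fintype.sum_bool, boolSpin, if_true, Bool.false_eq_true, if_false]
    ring

lemma one_div_four_pow_le_spinProduct (σ : ι → Bool) {m : ℝ} (hm : |m| ≤ 1 / 2) :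
    (1 / 4 : ℝ) ^ Fintype.card ι ≤ spinProduct σ m := by
  rw [← Finset.card_univ, ← Finset.prod_const]
  exact Finset.prod_le_prod (fun _ _ ↦ by norm_num) fun i _ ↦ by
    linarith [neg_le_of_abs_le ((abs_mul_boolSpin m (σ i)).trans_le hm)]

variable {P Q : Measure ℝ} {S : Set ℝ} {A : ℝ}

lemma IsMeanLaw.isRandomPMF [DecidableEq ι] (hP : IsMeanLaw P) :
    IsRandomPMF (spinProduct (ι := ι)) P where
  measurable σ := (continuous_spinProduct σ).measurable
  ae_nonneg := by
    filter_upwards [hP.ae_abs_le_one] with m hm σ using spinProduct_nonneg σ hm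
  ae_sum_eq_one := ae_of_all _ sum_spinProduct

lemma IsMeanLaw.sum_mixture_spinProduct [DecidableEq ι] (hP : IsMeanLaw P) :
    ∑ σ : ι → Bool, mixture spinProduct P σ = 1 := by
  have := hP.isProbabilityMeasure
  rw [hP.isRandomPMF.sum_mixture, probReal_univ]

lemma IsMeanLaw.mixture_spinProduct_le_one (hP : IsMeanLaw P) (σ : ι → Bool) :
    mixture spinProduct P σ ≤ 1 := by
  classical
  rw [← hP.sum_mixture_spinProduct (ι := ι)]
  exact Finset.single_le_sum (fun τ _ ↦ hP.isRandomPMF.mixture_nonneg τ) (Finset.mem_univ σ)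

lemma IsMeanLaw.le_mixture_spinProduct (hQ : IsMeanLaw Q) (hS : MeasurableSet S)
    (hS_sub : S ⊆ Icc (-(1 / 2)) (1 / 2)) (σ : ι → Bool) :
    (1 / 4 : ℝ) ^ Fintype.card ι * Q.real S ≤ mixture spinProduct Q σ := by
  classical
  have := hQ.isProbabilityMeasure
  have h_int := hQ.isRandomPMF.integrable σ
  calc (1 / 4 : ℝ) ^ Fintype.card ι * Q.real S = ∫ _ in S, (1 / 4 : ℝ) ^ Fintype.card ι ∂Q := by
        rw [setIntegral_const, smul_eq_mul, mul_comm]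
    _ ≤ ∫ m in S, spinProduct σ m ∂Q := setIntegral_mono_on integrableOn_const h_int.integrableOn hS
        fun m hm ↦ one_div_four_pow_le_spinProduct σ (abs_le.2 (hS_sub hm))
    _ ≤ mixture spinProduct Q σ := setIntegral_le_integral h_int (hQ.isRandomPMF.ae_nonneg_apply σ)

lemma IsMeanLaw.one_le_mul_mixture_spinProduct (hQ : IsMeanLaw Q) (hS : MeasurableSet S)
    (hS_sub : S ⊆ Icc (-(1 / 2)) (1 / 2)) (hQS : 1 / 2 ≤ Q.real S) (σ : ι → Bool) :
    1 ≤ 2 * 4 ^ Fintype.card ι * mixture spinProduct Q σ := by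
  calc (1 : ℝ) = 2 * 4 ^ Fintype.card ι * ((1 / 4) ^ Fintype.card ι * (1 / 2)) := by
        rw [one_div_pow]; field_simp
    _ ≤ 2 * 4 ^ Fintype.card ι * ((1 / 4) ^ Fintype.card ι * Q.real S) := by gcongr
    _ ≤ 2 * 4 ^ Fintype.card ι * mixture spinProduct Q σ := by
        gcongr
        exact hQ.le_mixture_spinProduct hS hS_sub σ

lemma one_add_log_two_mul_four_pow_le (n : ℕ) : 1 + log (2 * 4 ^ n) ≤ 2 * (n + 1) := by
  rw [show (2 : ℝ) * 4 ^ n = 2 ^ (2 * n + 1) by rw [pow_succ', pow_mul]; norm_num, log_pow]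
  push_cast
  nlinarith [log_two_lt_d9, (Nat.cast_nonneg n : (0 : ℝ) ≤ n)]

lemma relEnt_mixture_spinProduct_nonneg [DecidableEq ι] (hP : IsMeanLaw P) (hQ : IsMeanLaw Q)
    (hS : MeasurableSet S) (hS_sub : S ⊆ Icc (-(1 / 2)) (1 / 2)) (hQS : 1 / 2 ≤ Q.real S) :
    0 ≤ relEnt (mixture (spinProduct (ι := ι)) P) (mixture spinProduct Q) :=
  relEnt_nonneg hP.isRandomPMF.mixture_nonneg
    (fun σ ↦ pos_of_mul_pos_right
      (one_pos.trans_le (hQ.one_le_mul_mixture_spinProduct hS hS_sub hQS σ)) (by positivity))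
    (hQ.sum_mixture_spinProduct.trans hP.sum_mixture_spinProduct.symm).le

lemma relEnt_mixture_spinProduct_le [DecidableEq ι] (hP : IsMeanLaw P) (hQ : IsMeanLaw Q)
    (hS : MeasurableSet S) (hS_sub : S ⊆ Icc (-(1 / 2)) (1 / 2)) (hQS : 1 / 2 ≤ Q.real S)
    (hA : 0 < A) (h_le : P.restrict S ≤ ENNReal.ofReal A • Q) :
    relEnt (mixture (spinProduct (ι := ι)) P) (mixture spinProduct Q) ≤
      |log A| + 2 * (Fintype.card ι + 1) * P.real Sᶜ := by
  have := hP.isProbabilityMeasure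
  have := hQ.isProbabilityMeasure
  have h_ratio (σ : ι → Bool) : mixture spinProduct P σ ≤
      2 * 4 ^ Fintype.card ι * mixture spinProduct Q σ :=
    (hP.mixture_spinProduct_le_one σ).trans (hQ.one_le_mul_mixture_spinProduct hS hS_sub hQS σ)
  refine (hP.isRandomPMF.relEnt_mixture_le hQ.isRandomPMF hS hA (by positivity) h_le h_ratio).trans
    (add_le_add ?_ ?_)
  · calc log A * P.real S ≤ |log A| * P.real S := by gcongr; exact le_abs_self _
      _ ≤ |log A| := mul_le_of_le_one_right (abs_nonneg _) measureReal_le_one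
  · gcongr
    exact one_add_log_two_mul_four_pow_le _

lemma tendsto_relEnt_mixture_spinProduct {P Q : ℕ → Measure ℝ} {S : ℕ → Set ℝ} {A : ℕ → ℝ}
    (hP : ∀ᶠ N in atTop, IsMeanLaw (P N)) (hQ : ∀ᶠ N in atTop, IsMeanLaw (Q N))
    (hS : ∀ N, MeasurableSet (S N)) (hS_sub : ∀ᶠ N in atTop, S N ⊆ Icc (-(1 / 2)) (1 / 2))
    (h_le : ∀ᶠ N in atTop, (P N).restrict (S N) ≤ ENNReal.ofReal (A N) • Q N)
    (hA : Tendsto A atTop (𝓝 1))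
    (hPS : Tendsto (fun N : ℕ ↦ N * (P N).real (S N)ᶜ) atTop (𝓝 0))
    (hQS : Tendsto (fun N ↦ (Q N).real (S N)ᶜ) atTop (𝓝 0)) :
    Tendsto (fun N ↦ relEnt (mixture (spinProduct (ι := Fin N)) (P N)) (mixture spinProduct (Q N)))
      atTop (𝓝 0) := by
  have hQS_half : ∀ᶠ N in atTop, 1 / 2 ≤ (Q N).real (S N) := by
    filter_upwards [hQ, hQS.eventually_le_const (show (0 : ℝ) < 1 / 2 by norm_num)] with N hQN hN
    have := hQN.isProbabilityMeasure
    rw [probReal_compl_eq_one_sub (hS N)] at hN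
    linarith
  have h_bound : Tendsto (fun N : ℕ ↦ |log (A N)| + 4 * (N * (P N).real (S N)ᶜ)) atTop (𝓝 0) := by
    simpa using (hA.log one_ne_zero).abs.add (hPS.const_mul 4)
  refine squeeze_zero' ?_ ?_ h_bound
  · filter_upwards [hP, hQ, hS_sub, hQS_half] with N hPN hQN h_sub h_half
    exact relEnt_mixture_spinProduct_nonneg hPN hQN (hS N) h_sub h_half
  · filter_upwards [hP, hQ, hS_sub, hQS_half, h_le, hA.eventually_const_lt one_pos,
      eventually_ge_atTop 1] with N hPN hQN h_sub h_half h_leN hAN hN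
    have h_card : 2 * ((N : ℝ) + 1) ≤ 4 * N := by
      have : (1 : ℝ) ≤ N := by exact_mod_cast hN
      linarith
    refine (relEnt_mixture_spinProduct_le hPN hQN (hS N) h_sub h_half hAN h_leN).trans ?_
    rw [Fintype.card_fin, ← mul_assoc]
    gcongr

end SpinMixture

section Potential

lemma le_of_hasDerivAt_le {f g f' g' : ℝ → ℝ} {a x : ℝ} (hf : ∀ y, HasDerivAt f (f' y) y)
    (hg : ∀ y, HasDerivAt g (g' y) y) (ha : f a ≤ g a) (h_le : ∀ y, a ≤ y → f' y ≤ g' y)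
    (hx : a ≤ x) : f x ≤ g x :=
  image_le_of_deriv_right_le_deriv_boundary
    (fun y _ ↦ (hf y).continuousAt.continuousWithinAt) (fun y _ ↦ (hf y).hasDerivWithinAt) ha
    (fun y _ ↦ (hg y).continuousAt.continuousWithinAt) (fun y _ ↦ (hg y).hasDerivWithinAt)
    (fun y hy ↦ h_le y hy.1) (right_mem_Icc.2 hx)

lemma hasDerivAt_tanh (y : ℝ) : HasDerivAt tanh (1 - tanh y ^ 2) y := by
  have h := (hasDerivAt_sinh y).div (hasDerivAt_cosh y) (cosh_pos y).ne'
  rw [show tanh = sinh / cosh from funext tanh_eq_sinh_div_cosh]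
  refine h.congr_deriv ?_
  simp only [Pi.div_apply]
  field_simp [(cosh_pos y).ne']

lemma tanh_nonneg {y : ℝ} (hy : 0 ≤ y) : 0 ≤ tanh y := by
  rw [tanh_eq_sinh_div_cosh]
  exact div_nonneg (sinh_nonneg_iff.2 hy) (cosh_pos y).le

lemma tanh_le_self {y : ℝ} (hy : 0 ≤ y) : tanh y ≤ y :=
  le_of_hasDerivAt_le hasDerivAt_tanh hasDerivAt_id (by simp)
    (fun x _ ↦ by linarith [sq_nonneg (tanh x)]) hy

lemma abs_tanh_le_abs (y : ℝ) : |tanh y| ≤ |y| := by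
  wlog hy : 0 ≤ y generalizing y
  · simpa [tanh_neg] using this (-y) (by linarith)
  rw [abs_of_nonneg hy, abs_of_nonneg (tanh_nonneg hy)]
  exact tanh_le_self hy

lemma mul_one_sub_tanh_sq_le_tanh {y : ℝ} (hy : 0 ≤ y) : y * (1 - tanh y ^ 2) ≤ tanh y := by
  refine le_of_hasDerivAt_le
    (fun x ↦ (hasDerivAt_id x).mul (((hasDerivAt_tanh x).pow 2).const_sub 1)) hasDerivAt_tanh
    (by simp) (fun x hx ↦ ?_) hy
  have h_pos : 0 ≤ x * tanh x * (1 - tanh x ^ 2) :=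
    mul_nonneg (mul_nonneg hx (tanh_nonneg hx)) (by linarith [tanh_sq_lt_one x])
  simp only [id, Pi.pow_apply, Nat.cast_ofNat, Nat.add_one_sub_one, pow_one]
  linarith

lemma three_mul_tanh_le {y : ℝ} (hy : 0 ≤ y) : 3 * tanh y ≤ y * (3 - tanh y ^ 2) := by
  refine le_of_hasDerivAt_le (fun x ↦ (hasDerivAt_tanh x).const_mul 3)
    (fun x ↦ (hasDerivAt_id x).mul (((hasDerivAt_tanh x).pow 2).const_sub 3))
    (by simp) (fun x hx ↦ ?_) hy
  have h_pos := mul_le_mul_of_nonneg_left (mul_one_sub_tanh_sq_le_tanh hx) (tanh_nonneg hx)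
  simp only [id, Pi.pow_apply, Nat.cast_ofNat, Nat.add_one_sub_one, pow_one]
  linarith

lemma sub_tanh_le {y : ℝ} (hy : 0 ≤ y) : y - tanh y ≤ y ^ 3 / 3 := by
  refine le_of_hasDerivAt_le (fun x ↦ (hasDerivAt_id x).sub (hasDerivAt_tanh x))
    (fun x ↦ ((hasDerivAt_id x).pow 3).div_const 3) (by simp) (fun x hx ↦ ?_) hy
  have h_sq := pow_le_pow_left₀ (tanh_nonneg hx) (tanh_le_self hx) 2
  simp only [id, Nat.cast_ofNat, Nat.add_one_sub_one]
  linarith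

lemma sq_sub_tanh_sq_le {y : ℝ} (hy : 0 ≤ y) : y ^ 2 - tanh y ^ 2 ≤ 2 * y ^ 4 / 3 := by
  calc y ^ 2 - tanh y ^ 2 = (y - tanh y) * (y + tanh y) := by ring
    _ ≤ y ^ 3 / 3 * (y + y) := by
        gcongr
        · linarith [tanh_nonneg hy]
        · exact sub_tanh_le hy
        · exact tanh_le_self hy
    _ = 2 * y ^ 4 / 3 := by ring

/-- The exponent `log cosh y - y² / 2` of the Hubbard–Stratonovich representation of the critical
Curie–Weiss model. -/
noncomputable def cwPotential (y : ℝ) : ℝ := log (cosh y) - y ^ 2 / 2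

lemma hasDerivAt_cwPotential (y : ℝ) : HasDerivAt cwPotential (tanh y - y) y := by
  refine (((hasDerivAt_cosh y).log (cosh_pos y).ne').sub
    (((hasDerivAt_id y).pow 2).div_const 2)).congr_deriv ?_
  rw [tanh_eq_sinh_div_cosh]
  simp

lemma cwPotential_zero : cwPotential 0 = 0 := by simp [cwPotential]

lemma cwPotential_neg (y : ℝ) : cwPotential (-y) = cwPotential y := by
  rw [cwPotential, cosh_neg, neg_sq, cwPotential]

lemma cwPotential_le (y : ℝ) : cwPotential y ≤ 1 - 1 / 4 * y ^ 2 := by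
  have h_log : log (cosh y) ≤ |y| := by
    rw [log_le_iff_le_exp (cosh_pos y), ← cosh_abs, cosh_eq]
    linarith [exp_le_exp.2 (neg_le_self (abs_nonneg y))]
  rw [cwPotential, ← sq_abs]
  linarith [sq_nonneg (|y| / 2 - 1)]

lemma four_mul_cwPotential_le (y : ℝ) : 4 * cwPotential y ≤ y * (tanh y - y) := by
  wlog hy : 0 ≤ y generalizing y
  · have h := this (-y) (by linarith)
    rw [cwPotential_neg, tanh_neg] at h
    linarith
  refine le_of_hasDerivAt_le (fun x ↦ (hasDerivAt_cwPotential x).const_mul 4)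
    (fun x ↦ (hasDerivAt_id x).mul ((hasDerivAt_tanh x).sub (hasDerivAt_id x)))
    (by simp [cwPotential_zero]) (fun x hx ↦ ?_) hy
  simp only [id, Pi.sub_apply]
  linarith [three_mul_tanh_le hx]

lemma neg_pow_four_le_cwPotential {y : ℝ} (hy : 0 ≤ y) : -y ^ 4 / 12 ≤ cwPotential y := by
  refine le_of_hasDerivAt_le (fun x ↦ ((hasDerivAt_id x).pow 4).neg.div_const 12)
    hasDerivAt_cwPotential (by simp [cwPotential_zero]) (fun x hx ↦ ?_) hy
  simp only [id, Nat.cast_ofNat, Nat.add_one_sub_one]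
  linarith [sub_tanh_le hx]

lemma cwPotential_le_neg_pow_four_add {y : ℝ} (hy : 0 ≤ y) :
    cwPotential y ≤ -y ^ 4 / 12 + y ^ 6 / 27 := by
  refine le_of_hasDerivAt_le hasDerivAt_cwPotential
    (fun x ↦ (((hasDerivAt_id x).pow 4).neg.div_const 12).add
      (((hasDerivAt_id x).pow 6).div_const 27)) (by simp [cwPotential_zero]) (fun x hx ↦ ?_) hy
  have h_sq := mul_le_mul_of_nonneg_left (sq_sub_tanh_sq_le hx) hx
  simp only [id, Nat.cast_ofNat, Nat.add_one_sub_one]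
  linarith [three_mul_tanh_le hx]

lemma abs_cwPotential_add_pow_four_le (y : ℝ) : |cwPotential y + y ^ 4 / 12| ≤ y ^ 6 / 27 := by
  wlog hy : 0 ≤ y generalizing y
  · simpa [cwPotential_neg, Even.neg_pow (by decide : Even 4), Even.neg_pow (by decide : Even 6)]
      using this (-y) (by linarith)
  have h_nonneg : 0 ≤ y ^ 6 := by positivity
  rw [abs_le]
  constructor <;> linarith [neg_pow_four_le_cwPotential hy, cwPotential_le_neg_pow_four_add hy]

lemma abs_cwPotential_add_tanh_pow_four_le {y : ℝ} (hy : |tanh y| ≤ 1 / 2) :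
    |cwPotential y + tanh y ^ 4 / 12| ≤ tanh y ^ 6 := by
  wlog hy0 : 0 ≤ y generalizing y
  · simpa [cwPotential_neg, Even.neg_pow (by decide : Even 4), Even.neg_pow (by decide : Even 6)]
      using this (y := -y) (by rwa [tanh_neg, abs_neg]) (by linarith)
  have ht := tanh_nonneg hy0
  have h_le : y ≤ 4 / 3 * tanh y := by
    have h_sq : tanh y ^ 2 ≤ (1 / 2) ^ 2 := sq_le_sq.2 (by rwa [abs_of_pos (one_half_pos (α := ℝ))])
    nlinarith [mul_one_sub_tanh_sq_le_tanh hy0]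
  have h_six : y ^ 6 / 9 ≤ tanh y ^ 6 := by
    have := pow_le_pow_left₀ hy0 h_le 6
    have := pow_nonneg ht 6
    linarith
  have h_four : y ^ 4 - tanh y ^ 4 ≤ 4 * y ^ 6 / 3 := by
    calc y ^ 4 - tanh y ^ 4 = (y ^ 2 - tanh y ^ 2) * (y ^ 2 + tanh y ^ 2) := by ring
      _ ≤ 2 * y ^ 4 / 3 * (y ^ 2 + y ^ 2) := by
          gcongr
          · exact sq_sub_tanh_sq_le hy0
          · exact tanh_le_self hy0
      _ = 4 * y ^ 6 / 3 := by ring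
  have h_tanh_four := pow_le_pow_left₀ ht (tanh_le_self hy0) 4
  have h_pot := abs_le.1 (abs_cwPotential_add_pow_four_le y)
  rw [abs_le]
  constructor
  · linarith [neg_pow_four_le_cwPotential hy0]
  · linarith

/-- The potential on the scale `M` on which it approaches `-s⁴ / 12`. -/
noncomputable def scaledPotential (M s : ℝ) : ℝ := M ^ 4 * cwPotential (s / M)

lemma continuous_scaledPotential (M : ℝ) : Continuous (scaledPotential M) :=
  continuous_const.mul ((continuous_iff_continuousAt.2
    fun y ↦ (hasDerivAt_cwPotential y).continuousAt).comp (continuous_id.div_const M))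

lemma hasDerivAt_scaledPotential {M : ℝ} (hM : 0 < M) (s : ℝ) :
    HasDerivAt (fun M ↦ scaledPotential M s)
      (M ^ 3 * (4 * cwPotential (s / M) - s / M * (tanh (s / M) - s / M))) M := by
  have h_div : HasDerivAt (fun M ↦ s / M) (-s / M ^ 2) M := by
    simpa using (hasDerivAt_const M s).fun_div (hasDerivAt_id M) hM.ne'
  refine ((hasDerivAt_pow 4 M).mul ((hasDerivAt_cwPotential (s / M)).comp M h_div)).congr_deriv ?_
  simp only [Function.comp_apply, Nat.cast_ofNat, Nat.add_one_sub_one]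
  field_simp
  ring

lemma antitoneOn_scaledPotential (s : ℝ) : AntitoneOn (fun M ↦ scaledPotential M s) (Ioi 0) := by
  refine antitoneOn_of_deriv_nonpos (convex_Ioi 0)
    (fun M hM ↦ (hasDerivAt_scaledPotential hM s).continuousAt.continuousWithinAt) ?_ ?_
  all_goals rw [interior_Ioi]
  · exact fun M hM ↦ (hasDerivAt_scaledPotential hM s).differentiableAt.differentiableWithinAt
  · intro M hM
    rw [(hasDerivAt_scaledPotential hM s).deriv]
    exact mul_nonpos_of_nonneg_of_nonpos (pow_pos hM 3).le
      (sub_nonpos.2 (four_mul_cwPotential_le (s / M)))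

lemma scaledPotential_le {M : ℝ} (hM : 1 ≤ M) (s : ℝ) :
    scaledPotential M s ≤ 1 - 1 / 4 * s ^ 2 := by
  calc scaledPotential M s ≤ scaledPotential 1 s :=
        antitoneOn_scaledPotential s (mem_Ioi.2 one_pos) (mem_Ioi.2 (one_pos.trans_le hM)) hM
    _ ≤ 1 - 1 / 4 * s ^ 2 := by simpa [scaledPotential] using cwPotential_le s

lemma tendsto_scaledPotential (s : ℝ) :
    Tendsto (fun M ↦ scaledPotential M s) atTop (𝓝 (-s ^ 4 / 12)) := by
  have h_bound : Tendsto (fun M : ℝ ↦ s ^ 6 / 27 / M ^ 2) atTop (𝓝 0) :=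
    tendsto_const_nhds.div_atTop (tendsto_pow_atTop two_ne_zero)
  rw [tendsto_iff_dist_tendsto_zero]
  refine squeeze_zero' (.of_forall fun _ ↦ dist_nonneg) ?_ h_bound
  filter_upwards [eventually_gt_atTop 0] with M hM
  have h_pot := mul_le_mul_of_nonneg_left (abs_cwPotential_add_pow_four_le (s / M))
    (pow_pos hM 4).le
  calc dist (scaledPotential M s) (-s ^ 4 / 12)
      = M ^ 4 * |cwPotential (s / M) + (s / M) ^ 4 / 12| := by
        rw [Real.dist_eq, scaledPotential, ← abs_of_pos (pow_pos hM 4), ← abs_mul,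
          abs_of_pos (pow_pos hM 4)]
        congr 1
        field_simp
        ring
    _ ≤ M ^ 4 * ((s / M) ^ 6 / 27) := h_pot
    _ = s ^ 6 / 27 / M ^ 2 := by field_simp

end Potential

section GaussianDomination

variable {f : ℝ → ℝ}

lemma integrable_exp_one_sub_mul_sq {b : ℝ} (hb : 0 < b) :
    Integrable fun s : ℝ ↦ exp (1 - b * s ^ 2) := by
  simpa only [sub_eq_add_neg, exp_add, neg_mul] using
    (integrable_exp_neg_mul_sq hb).const_mul (exp 1)

lemma integrable_exp_of_le_one_sub_mul_sq {b : ℝ} (hb : 0 < b) (hf : Measurable f)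
    (hf_le : ∀ s, f s ≤ 1 - b * s ^ 2) : Integrable fun s ↦ exp (f s) :=
  (integrable_exp_one_sub_mul_sq hb).mono' hf.exp.aestronglyMeasurable
    (ae_of_all _ fun s ↦ by rw [norm_of_nonneg (exp_pos _).le]; exact exp_le_exp.2 (hf_le s))

lemma tilted_real_lt_abs_le {b c ρ : ℝ} (hc : 0 ≤ c) (hcb : c < b) (hρ : 0 ≤ ρ)
    (hf : Measurable f) (hf_le : ∀ s, f s ≤ 1 - b * s ^ 2) :
    (volume.tilted f).real {s | ρ < |s|} ≤
      exp (-(c * ρ ^ 2)) * ((∫ s, exp (1 - (b - c) * s ^ 2)) / ∫ s, exp (f s)) := by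
  have h_int := integrable_exp_of_le_one_sub_mul_sq (hc.trans_lt hcb) hf hf_le
  have h_le (s : ℝ) : f s + c * s ^ 2 ≤ 1 - (b - c) * s ^ 2 := by linarith [hf_le s]
  have h_int_add : Integrable fun s ↦ exp (f s + c * s ^ 2) :=
    integrable_exp_of_le_one_sub_mul_sq (sub_pos.2 hcb) (by fun_prop) h_le
  have h_markov : exp (c * ρ ^ 2) * (volume.tilted f).real {s | ρ < |s|} ≤
      ∫ s, exp (c * s ^ 2) ∂volume.tilted f := by
    have := isProbabilityMeasure_tilted h_int
    refine le_trans ?_ (mul_meas_ge_le_integral_of_nonneg (ae_of_all _ fun s ↦ (exp_pos _).le)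
      ((integrable_tilted_iff h_int _).2 (by simpa only [smul_eq_mul, ← exp_add] using h_int_add))
      (exp (c * ρ ^ 2)))
    refine mul_le_mul_of_nonneg_left (measureReal_mono fun s hs ↦ ?_) (exp_pos _).le
    exact exp_le_exp.2 (mul_le_mul_of_nonneg_left
      (sq_le_sq.2 (by rw [abs_of_nonneg hρ]; exact hs.le)) hc)
  rw [exp_neg, inv_mul_eq_div, le_div_iff₀' (exp_pos _)]
  refine h_markov.trans ?_
  rw [integral_exp_tilted]
  exact div_le_div_of_nonneg_right (integral_mono h_int_add
    (integrable_exp_one_sub_mul_sq (sub_pos.2 hcb)) fun s ↦ exp_le_exp.2 (h_le s))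
    (integral_exp_pos h_int).le

end GaussianDomination

section MixingLaws

lemma neg_pow_four_le (s : ℝ) : -s ^ 4 / 12 ≤ 1 - 1 / 4 * s ^ 2 := by
  nlinarith [sq_nonneg (s ^ 2 - 3 / 2)]

lemma integrable_exp_scaledPotential {M : ℝ} (hM : 1 ≤ M) :
    Integrable fun s ↦ exp (scaledPotential M s) :=
  integrable_exp_of_le_one_sub_mul_sq (by norm_num) (continuous_scaledPotential M).measurable
    (scaledPotential_le hM)

lemma integrable_exp_neg_pow_four : Integrable fun s : ℝ ↦ exp (-s ^ 4 / 12) :=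
  integrable_exp_of_le_one_sub_mul_sq (by norm_num) (by fun_prop) neg_pow_four_le

lemma tendsto_integral_exp_scaledPotential :
    Tendsto (fun M ↦ ∫ s, exp (scaledPotential M s)) atTop (𝓝 (∫ s, exp (-s ^ 4 / 12))) := by
  refine tendsto_integral_filter_of_dominated_convergence (fun s ↦ exp (1 - 1 / 4 * s ^ 2))
    (.of_forall fun M ↦ (continuous_scaledPotential M).rexp.aestronglyMeasurable) ?_
    (integrable_exp_one_sub_mul_sq (by norm_num))
    (ae_of_all _ fun s ↦ (continuous_exp.tendsto _).comp (tendsto_scaledPotential s))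
  filter_upwards [eventually_ge_atTop 1] with M hM
  refine ae_of_all _ fun s ↦ ?_
  rw [norm_of_nonneg (exp_pos _).le]
  exact exp_le_exp.2 (scaledPotential_le hM s)

/-- The law of the spin mean that represents the critical Curie–Weiss measure on `M⁴` spins as a
mixture of product measures. -/
noncomputable def cwMixing (M : ℝ) : Measure ℝ :=
  (volume.tilted (scaledPotential M)).map fun s ↦ tanh (s / M)

/-- The law of `ξ 1{|ξ| ≤ R} / M` for `ξ` with density proportional to `exp (-x⁴ / 12)`. -/
noncomputable def quarticMixing (M R : ℝ) : Measure ℝ :=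
  (volume.tilted fun x : ℝ ↦ -x ^ 4 / 12).map fun t ↦ (if |t| ≤ R then t else 0) / M

lemma measurable_tanh_div (M : ℝ) : Measurable fun s ↦ tanh (s / M) :=
  ((continuous_iff_continuousAt.2 fun y ↦ (hasDerivAt_tanh y).continuousAt).comp
    (continuous_id.div_const M)).measurable

lemma measurable_truncate_div (M R : ℝ) :
    Measurable fun t : ℝ ↦ (if |t| ≤ R then t else 0) / M :=
  (Measurable.ite (measurableSet_le (by fun_prop) measurable_const) measurable_id
    measurable_const).div_const M

lemma isMeanLaw_cwMixing {M : ℝ} (hM : 1 ≤ M) : IsMeanLaw (cwMixing M) := by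
  have := isProbabilityMeasure_tilted (integrable_exp_scaledPotential hM)
  have h_meas := (measurable_tanh_div M).aemeasurable (μ := volume.tilted (scaledPotential M))
  refine ⟨Measure.isProbabilityMeasure_map h_meas, ?_⟩
  rw [cwMixing, ae_map_iff h_meas (measurableSet_le (by fun_prop) measurable_const)]
  exact ae_of_all _ fun s ↦ (abs_tanh_lt_one _).le

lemma isMeanLaw_quarticMixing {M R : ℝ} (hM : 0 < M) (hRM : R ≤ M) :
    IsMeanLaw (quarticMixing M R) := by
  have := isProbabilityMeasure_tilted integrable_exp_neg_pow_four
  have h_meas := (measurable_truncate_div M R).aemeasurable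
    (μ := volume.tilted fun x : ℝ ↦ -x ^ 4 / 12)
  refine ⟨Measure.isProbabilityMeasure_map h_meas, ?_⟩
  rw [quarticMixing, ae_map_iff h_meas (measurableSet_le (by fun_prop) measurable_const)]
  refine ae_of_all _ fun t ↦ ?_
  rw [abs_div, abs_of_pos hM, div_le_one hM]
  split_ifs with ht
  · exact ht.trans hRM
  · simpa using hM.le

end MixingLaws

section HubbardStratonovich

variable {ι : Type*} [Fintype ι]

/-- The unnormalised critical Curie–Weiss weight of a configuration. -/
noncomputable def cwWeight (σ : ι → Bool) : ℝ :=
  exp (1 / (2 * Fintype.card ι) * ∑ i, ∑ j, boolSpin (σ i) * boolSpin (σ j))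

lemma cwWeight_eq (σ : ι → Bool) :
    cwWeight σ = exp ((∑ i, boolSpin (σ i)) ^ 2 / (2 * Fintype.card ι)) := by
  rw [cwWeight, ← Finset.sum_mul_sum, ← sq, one_div, inv_mul_eq_div]

lemma integral_exp_linear_sub_sq {b : ℝ} (hb : 0 < b) (c : ℝ) :
    ∫ s, exp (c * s - b * s ^ 2) = √(Real.pi / b) * exp (c ^ 2 / (4 * b)) := by
  have h_square (s : ℝ) : exp (c * s - b * s ^ 2) =
      exp (-b * (s - c / (2 * b)) ^ 2) * exp (c ^ 2 / (4 * b)) := by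
    rw [← exp_add]
    congr 1
    field_simp
    ring
  simp only [h_square]
  rw [integral_mul_const, integral_sub_right_eq_self fun s ↦ exp (-b * s ^ 2), integral_gaussian]

lemma half_mul_one_add_tanh_mul_boolSpin (y : ℝ) (b : Bool) :
    1 / 2 * (1 + tanh y * boolSpin b) = 1 / 2 * exp (y * boolSpin b - log (cosh y)) := by
  rw [exp_sub, exp_log (cosh_pos y), tanh_eq_sinh_div_cosh]
  have h_cosh := (cosh_pos y).ne'
  cases b <;> simp only [boolSpin, if_true, Bool.false_eq_true, if_false, mul_one, mul_neg_one]
  · rw [← cosh_sub_sinh]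
    field_simp
    ring
  · rw [← cosh_add_sinh]
    field_simp

lemma spinProduct_tanh (σ : ι → Bool) (y : ℝ) :
    spinProduct σ (tanh y) = (1 / 2) ^ Fintype.card ι *
      exp (y * ∑ i, boolSpin (σ i) - Fintype.card ι * log (cosh y)) := by
  simp only [spinProduct, half_mul_one_add_tanh_mul_boolSpin]
  rw [Finset.prod_mul_distrib, ← exp_sum, Finset.sum_sub_distrib, ← Finset.mul_sum]
  simp

lemma eq_div_sum_of_eq_const_mul {α : Type*} [Fintype α] {f g : α → ℝ} {c : ℝ}
    (hfg : ∀ x, f x = c * g x) (hf : ∑ x, f x = 1) (x : α) : f x = g x / ∑ y, g y := by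
  have h_norm : c * ∑ y, g y = 1 := by rw [← hf, Finset.mul_sum]; simp only [hfg]
  rw [hfg, eq_div_iff (right_ne_zero_of_mul_eq_one h_norm), mul_right_comm, h_norm, one_mul]

lemma mixture_spinProduct_cwMixing_eq_const_mul {M : ℝ} (hM : 0 < M) (hMι : M ^ 4 = Fintype.card ι)
    (σ : ι → Bool) :
    mixture spinProduct (cwMixing M) σ = (1 / 2) ^ Fintype.card ι * √(Real.pi / (M ^ 2 / 2)) /
      (∫ s, exp (scaledPotential M s)) * cwWeight σ := by
  have h_integrand (s : ℝ) : exp (scaledPotential M s) * spinProduct σ (tanh (s / M)) =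
      (1 / 2) ^ Fintype.card ι * exp ((∑ i, boolSpin (σ i)) / M * s - M ^ 2 / 2 * s ^ 2) := by
    rw [spinProduct_tanh, mul_left_comm, ← exp_add, scaledPotential, cwPotential, ← hMι]
    congr 2
    field_simp
    ring
  have h_integral : ∫ s, exp (scaledPotential M s) * spinProduct σ (tanh (s / M)) =
      (1 / 2) ^ Fintype.card ι * (√(Real.pi / (M ^ 2 / 2)) * cwWeight σ) := by
    simp only [h_integrand]
    rw [integral_const_mul, integral_exp_linear_sub_sq (by positivity), cwWeight_eq, ← hMι]
    congr 3
    field_simp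
    norm_num
  rw [mixture, cwMixing, integral_map (measurable_tanh_div M).aemeasurable
    (continuous_spinProduct σ).aestronglyMeasurable, integral_tilted]
  simp only [smul_eq_mul, div_mul_eq_mul_div]
  rw [integral_div, h_integral]
  ring

lemma mixture_spinProduct_cwMixing [DecidableEq ι] {M : ℝ} (hM : 1 ≤ M)
    (hMι : M ^ 4 = Fintype.card ι) (σ : ι → Bool) :
    mixture spinProduct (cwMixing M) σ = cwWeight σ / ∑ τ : ι → Bool, cwWeight τ :=
  eq_div_sum_of_eq_const_mul (mixture_spinProduct_cwMixing_eq_const_mul (one_pos.trans_le hM) hMι)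
    (isMeanLaw_cwMixing hM).sum_mixture_spinProduct σ

lemma mixture_spinProduct_quarticMixing (M R : ℝ) (σ : ι → Bool) :
    mixture spinProduct (quarticMixing M R) σ =
      ∫ t, spinProduct σ ((if |t| ≤ R then t else 0) / M) *
        (exp (-t ^ 4 / 12) / ∫ y : ℝ, exp (-y ^ 4 / 12)) := by
  rw [mixture, quarticMixing, integral_map (measurable_truncate_div M R).aemeasurable
    (continuous_spinProduct σ).aestronglyMeasurable, integral_tilted]
  simp only [smul_eq_mul, mul_comm]

end HubbardStratonovich

section Bulk

/-- The means `m ≠ 0` with `|m| ≤ r`. The origin is left out because truncating `ξ` creates an atom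
there. -/
def bulk (r : ℝ) : Set ℝ := Icc (-r) r \ {0}

/-- The error `exp (M⁴ r⁶) / (1 - r²)` in replacing `exp (-(M m)⁴ / 12) dm` by the density of
`cwMixing M` on `bulk r`: the first factor comes from the sixth-order term of the potential, the
second from the Jacobian of `tanh`. -/
noncomputable def densityError (M r : ℝ) : ℝ := exp (M ^ 4 * r ^ 6) / (1 - r ^ 2)

lemma mem_bulk {r m : ℝ} : m ∈ bulk r ↔ |m| ≤ r ∧ m ≠ 0 := by
  rw [bulk, Set.mem_sdiff, mem_Icc, ← abs_le, mem_singleton_iff]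

lemma measurableSet_bulk (r : ℝ) : MeasurableSet (bulk r) :=
  measurableSet_Icc.diff (measurableSet_singleton 0)

lemma restrict_le_smul_of_setLIntegral {Ω Ω' : Type*} [MeasurableSpace Ω] [MeasurableSpace Ω']
    {P Q : Measure Ω'} {κ : Measure Ω} {g : Ω → Ω'} {p q : Ω → ℝ} {S : Set Ω'} {A : ℝ}
    (hg : Measurable g) (hS : MeasurableSet S) (hA : 0 ≤ A)
    (hP : ∀ B ⊆ S, MeasurableSet B → P B = ∫⁻ s in g ⁻¹' B, ENNReal.ofReal (p s) ∂κ)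
    (hQ : ∀ B ⊆ S, MeasurableSet B → Q B = ∫⁻ s in g ⁻¹' B, ENNReal.ofReal (q s) ∂κ)
    (hpq : ∀ s ∈ g ⁻¹' S, p s ≤ A * q s) : P.restrict S ≤ ENNReal.ofReal A • Q := by
  refine Measure.le_iff.2 fun B hB ↦ ?_
  have hBS : B ∩ S ⊆ S := inter_subset_right
  calc P.restrict S B = ∫⁻ s in g ⁻¹' (B ∩ S), ENNReal.ofReal (p s) ∂κ := by
        rw [Measure.restrict_apply hB, hP _ hBS (hB.inter hS)]
    _ ≤ ∫⁻ s in g ⁻¹' (B ∩ S), ENNReal.ofReal A * ENNReal.ofReal (q s) ∂κ := by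
        refine setLIntegral_mono' (hg (hB.inter hS)) fun s hs ↦ ?_
        rw [← ENNReal.ofReal_mul hA]
        exact ENNReal.ofReal_le_ofReal (hpq s (hBS hs))
    _ = ENNReal.ofReal A * Q (B ∩ S) := by
        rw [lintegral_const_mul' _ _ ENNReal.ofReal_ne_top, hQ _ hBS (hB.inter hS)]
    _ ≤ (ENNReal.ofReal A • Q) B := by
        rw [Measure.smul_apply, smul_eq_mul]
        gcongr
        exact inter_subset_left

lemma cwMixing_apply (M : ℝ) {B : Set ℝ} (hB : MeasurableSet B) :
    cwMixing M B = ∫⁻ s in (fun s ↦ tanh (s / M)) ⁻¹' B,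
      ENNReal.ofReal (exp (scaledPotential M s) / ∫ y, exp (scaledPotential M y)) := by
  rw [cwMixing, Measure.map_apply (measurable_tanh_div M) hB, tilted_apply]

lemma preimage_truncate_div {M R r : ℝ} (hM : 0 < M) (hrR : r * M ≤ R) {B : Set ℝ}
    (hBr : B ⊆ bulk r) :
    (fun t : ℝ ↦ (if |t| ≤ R then t else 0) / M) ⁻¹' B = (fun t ↦ t / M) ⁻¹' B := by
  ext t
  simp only [mem_preimage]
  by_cases ht : |t| ≤ R
  · rw [if_pos ht]
  · rw [if_neg ht, zero_div]
    refine iff_of_false (fun h ↦ (mem_bulk.1 (hBr h)).2 rfl) fun h ↦ ht ?_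
    have h_le := (mem_bulk.1 (hBr h)).1
    rw [abs_div, abs_of_pos hM, div_le_iff₀ hM] at h_le
    exact h_le.trans hrR

lemma preimage_div_eq_image {M : ℝ} (hM : M ≠ 0) {B : Set ℝ} (hB : B ⊆ Ioo (-1) 1) :
    (fun t ↦ t / M) ⁻¹' B = (fun s ↦ M * tanh (s / M)) '' ((fun s ↦ tanh (s / M)) ⁻¹' B) := by
  ext t
  constructor
  · intro ht
    have h_tanh : tanh (M * artanh (t / M) / M) = t / M := by
      rw [mul_div_cancel_left₀ _ hM, tanh_artanh (hB ht)]
    refine ⟨M * artanh (t / M), ?_, ?_⟩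
    · simpa only [mem_preimage, h_tanh] using ht
    · simp only [h_tanh, mul_div_cancel₀ _ hM]
  · rintro ⟨s, hs, rfl⟩
    simpa only [mem_preimage, mul_div_cancel_left₀ _ hM] using hs

lemma hasDerivAt_mul_tanh_div {M : ℝ} (hM : M ≠ 0) (s : ℝ) :
    HasDerivAt (fun s ↦ M * tanh (s / M)) (1 - tanh (s / M) ^ 2) s := by
  refine (((hasDerivAt_tanh (s / M)).comp s ((hasDerivAt_id s).div_const M)).const_mul
    M).congr_deriv ?_
  field_simp

lemma quarticMixing_apply {M R r : ℝ} (hM : 0 < M) (hr : r < 1) (hrR : r * M ≤ R) {B : Set ℝ}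
    (hB : MeasurableSet B) (hBr : B ⊆ bulk r) :
    quarticMixing M R B = ∫⁻ s in (fun s ↦ tanh (s / M)) ⁻¹' B,
      ENNReal.ofReal ((1 - tanh (s / M) ^ 2) * (exp (-(M * tanh (s / M)) ^ 4 / 12) /
        ∫ y : ℝ, exp (-y ^ 4 / 12))) := by
  have h_inj : Function.Injective fun s ↦ M * tanh (s / M) := fun s t hst ↦
    (div_left_inj' hM.ne').1 (tanh_injective (mul_left_cancel₀ hM.ne' hst))
  rw [quarticMixing, Measure.map_apply (measurable_truncate_div M R) hB,
    preimage_truncate_div hM hrR hBr,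
    preimage_div_eq_image hM.ne' fun m hm ↦ abs_lt.1 ((mem_bulk.1 (hBr hm)).1.trans_lt hr),
    tilted_apply, lintegral_image_eq_lintegral_abs_deriv_mul (measurable_tanh_div M hB)
      (fun s _ ↦ (hasDerivAt_mul_tanh_div hM.ne' s).hasDerivWithinAt) h_inj.injOn]
  refine lintegral_congr fun s ↦ ?_
  have h_deriv : 0 ≤ 1 - tanh (s / M) ^ 2 := by linarith [tanh_sq_lt_one (s / M)]
  rw [abs_of_nonneg h_deriv, ENNReal.ofReal_mul h_deriv]

variable {M R r : ℝ}

lemma exp_le_densityError_mul {y : ℝ} (hr : r < 1) (hy : |tanh y| ≤ r) :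
    exp (M ^ 4 * r ^ 6) ≤ densityError M r * (1 - tanh y ^ 2) := by
  have h_sq : tanh y ^ 2 ≤ r ^ 2 := sq_abs (tanh y) ▸ pow_le_pow_left₀ (abs_nonneg _) hy 2
  have h_pos : 0 < 1 - r ^ 2 := by nlinarith [(abs_nonneg (tanh y)).trans hy]
  rw [densityError, div_mul_eq_mul_div, le_div_iff₀ h_pos]
  gcongr

lemma abs_scaledPotential_add_le (hr : r ≤ 1 / 2) {s : ℝ} (hs : |tanh (s / M)| ≤ r) :
    |scaledPotential M s - -(M * tanh (s / M)) ^ 4 / 12| ≤ M ^ 4 * r ^ 6 := by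
  have h_pow : tanh (s / M) ^ 6 ≤ r ^ 6 := by
    rw [← Even.pow_abs (by decide : Even 6)]
    exact pow_le_pow_left₀ (abs_nonneg _) hs 6
  calc |scaledPotential M s - -(M * tanh (s / M)) ^ 4 / 12|
      = M ^ 4 * |cwPotential (s / M) + tanh (s / M) ^ 4 / 12| := by
        rw [scaledPotential, ← abs_of_nonneg (by positivity : 0 ≤ M ^ 4), ← abs_mul,
          abs_of_nonneg (by positivity : 0 ≤ M ^ 4)]
        ring_nf
    _ ≤ M ^ 4 * r ^ 6 := by
        gcongr
        exact (abs_cwPotential_add_tanh_pow_four_le (hs.trans hr)).trans h_pow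

lemma exp_scaledPotential_le (hr : r ≤ 1 / 2) {s : ℝ} (hs : |tanh (s / M)| ≤ r) :
    exp (scaledPotential M s) ≤
      densityError M r * ((1 - tanh (s / M) ^ 2) * exp (-(M * tanh (s / M)) ^ 4 / 12)) := by
  calc exp (scaledPotential M s)
      ≤ exp (M ^ 4 * r ^ 6) * exp (-(M * tanh (s / M)) ^ 4 / 12) := by
        rw [← exp_add, exp_le_exp]
        linarith [(abs_le.1 (abs_scaledPotential_add_le hr hs)).2]
    _ ≤ densityError M r * (1 - tanh (s / M) ^ 2) * exp (-(M * tanh (s / M)) ^ 4 / 12) := by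
        gcongr
        exact exp_le_densityError_mul (by linarith) hs
    _ = _ := mul_assoc _ _ _

lemma exp_neg_pow_four_le (hr : r ≤ 1 / 2) {s : ℝ} (hs : |tanh (s / M)| ≤ r) :
    (1 - tanh (s / M) ^ 2) * exp (-(M * tanh (s / M)) ^ 4 / 12) ≤
      densityError M r * exp (scaledPotential M s) := by
  have h_error : exp (M ^ 4 * r ^ 6) ≤ densityError M r := by
    have hr0 := (abs_nonneg _).trans hs
    exact le_div_self (exp_pos _).le (by nlinarith) (by linarith [sq_nonneg r])
  calc (1 - tanh (s / M) ^ 2) * exp (-(M * tanh (s / M)) ^ 4 / 12)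
      ≤ 1 * exp (-(M * tanh (s / M)) ^ 4 / 12) := by
        gcongr
        linarith [sq_nonneg (tanh (s / M))]
    _ ≤ exp (M ^ 4 * r ^ 6) * exp (scaledPotential M s) := by
        rw [one_mul, ← exp_add, exp_le_exp]
        linarith [(abs_le.1 (abs_scaledPotential_add_le hr hs)).1]
    _ ≤ densityError M r * exp (scaledPotential M s) := by gcongr

lemma densityError_nonneg (hr0 : 0 ≤ r) (hr : r ≤ 1) : 0 ≤ densityError M r :=
  div_nonneg (exp_pos _).le (by nlinarith)

lemma cwMixing_restrict_bulk_le (hM : 0 < M) (hr0 : 0 ≤ r) (hr : r ≤ 1 / 2) (hrR : r * M ≤ R) :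
    (cwMixing M).restrict (bulk r) ≤ ENNReal.ofReal (densityError M r *
      ((∫ y : ℝ, exp (-y ^ 4 / 12)) / ∫ s, exp (scaledPotential M s))) • quarticMixing M R := by
  have h_quartic := integral_exp_pos integrable_exp_neg_pow_four
  have h_int : 0 ≤ ∫ s, exp (scaledPotential M s) := integral_nonneg fun s ↦ (exp_pos _).le
  refine restrict_le_smul_of_setLIntegral (measurable_tanh_div M) (measurableSet_bulk r)
    (mul_nonneg (densityError_nonneg hr0 (by linarith)) (div_nonneg h_quartic.le h_int))
    (fun B _ hB ↦ cwMixing_apply M hB)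
    (fun B hBr hB ↦ quarticMixing_apply hM (by linarith) hrR hB hBr) fun s hs ↦ ?_
  refine (div_le_div_of_nonneg_right (exp_scaledPotential_le hr (mem_bulk.1 hs).1)
    h_int).trans_eq ?_
  generalize (∫ y : ℝ, exp (-y ^ 4 / 12)) = C at h_quartic ⊢
  field_simp

lemma quarticMixing_restrict_bulk_le (hM : 1 ≤ M) (hr0 : 0 ≤ r) (hr : r ≤ 1 / 2)
    (hrR : r * M ≤ R) :
    (quarticMixing M R).restrict (bulk r) ≤ ENNReal.ofReal (densityError M r *
      ((∫ s, exp (scaledPotential M s)) / ∫ y : ℝ, exp (-y ^ 4 / 12))) • cwMixing M := by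
  have h_quartic := integral_exp_pos integrable_exp_neg_pow_four
  have h_int := integral_exp_pos (integrable_exp_scaledPotential hM)
  refine restrict_le_smul_of_setLIntegral (measurable_tanh_div M) (measurableSet_bulk r)
    (mul_nonneg (densityError_nonneg hr0 (by linarith)) (div_nonneg h_int.le h_quartic.le))
    (fun B hBr hB ↦ quarticMixing_apply (by linarith) (by linarith) hrR hB hBr)
    (fun B _ hB ↦ cwMixing_apply M hB) fun s hs ↦ ?_
  rw [← mul_div_assoc]
  refine (div_le_div_of_nonneg_right (exp_neg_pow_four_le hr (mem_bulk.1 hs).1)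
    h_quartic.le).trans_eq ?_
  field_simp

end Bulk

section Tails

lemma map_tilted_real_compl_le {f g : ℝ → ℝ} {ρ : ℝ} {S : Set ℝ} (hg : Measurable g)
    (hS : MeasurableSet S) (hgS : ∀ s, s ≠ 0 → |s| ≤ ρ → g s ∈ S) :
    ((volume.tilted f).map g).real Sᶜ ≤ (volume.tilted f).real {s | ρ < |s|} := by
  have h_ne : ∀ᵐ s ∂volume.tilted f, s ≠ 0 :=
    (tilted_absolutelyContinuous volume f).ae_le (Measure.ae_ne volume 0)
  rw [map_measureReal_apply hg hS.compl]
  refine ENNReal.toReal_mono (measure_ne_top _ _) (measure_mono_ae ?_)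
  filter_upwards [h_ne] with s hs hsS
  exact not_le.1 fun h_le ↦ hsS (hgS s hs h_le)

lemma cwMixing_real_compl_bulk_le {M ρ : ℝ} (hM : 0 < M) :
    (cwMixing M).real (bulk (ρ / M))ᶜ ≤
      (volume.tilted (scaledPotential M)).real {s | ρ < |s|} := by
  refine map_tilted_real_compl_le (measurable_tanh_div M) (measurableSet_bulk _)
    fun s hs0 hs ↦ mem_bulk.2 ⟨(abs_tanh_le_abs _).trans ?_, ?_⟩
  · rw [abs_div, abs_of_pos hM]
    gcongr
  · exact tanh_zero ▸ tanh_injective.ne (div_ne_zero hs0 hM.ne')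

lemma quarticMixing_real_compl_bulk_le {M ρ R : ℝ} (hM : 0 < M) (hρR : ρ ≤ R) :
    (quarticMixing M R).real (bulk (ρ / M))ᶜ ≤
      (volume.tilted fun x : ℝ ↦ -x ^ 4 / 12).real {s | ρ < |s|} := by
  refine map_tilted_real_compl_le (measurable_truncate_div M R) (measurableSet_bulk _)
    fun s hs0 hs ↦ ?_
  rw [if_pos (hs.trans hρR), mem_bulk, abs_div, abs_of_pos hM]
  exact ⟨by gcongr, div_ne_zero hs0 hM.ne'⟩

lemma tendsto_pow_mul_exp_neg_rpow (n : ℕ) {b κ : ℝ} (hb : 0 < b) (hκ : 0 < κ) :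
    Tendsto (fun M : ℝ ↦ M ^ n * exp (-(b * (M ^ κ) ^ 2))) atTop (𝓝 0) := by
  have h_top : Tendsto (fun M : ℝ ↦ (M ^ κ) ^ 2) atTop atTop :=
    (tendsto_pow_atTop two_ne_zero).comp (tendsto_rpow_atTop hκ)
  refine ((tendsto_rpow_mul_exp_neg_mul_atTop_nhds_zero (n / (κ * 2)) b hb).comp h_top).congr' ?_
  filter_upwards [eventually_ge_atTop 0] with M hM
  rw [Function.comp_apply, ← rpow_natCast (M ^ κ), ← rpow_mul hM, ← rpow_mul hM, Nat.cast_ofNat,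
    mul_div_cancel₀ _ (by positivity), rpow_natCast, neg_mul]

lemma tendsto_pow_mul_tilted_real {f : ℝ → ℝ → ℝ} {C κ : ℝ} (n : ℕ) (hκ : 0 < κ)
    (hf : ∀ M, Measurable (f M)) (hf_le : ∀ᶠ M in atTop, ∀ s, f M s ≤ 1 - 1 / 4 * s ^ 2)
    (hC : Tendsto (fun M ↦ ∫ s, exp (f M s)) atTop (𝓝 C)) (hC0 : C ≠ 0) :
    Tendsto (fun M ↦ M ^ n * (volume.tilted (f M)).real {s | M ^ κ < |s|}) atTop (𝓝 0) := by
  have h_bound : Tendsto (fun M : ℝ ↦ M ^ n * exp (-(1 / 8 * (M ^ κ) ^ 2)) *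
      ((∫ s : ℝ, exp (1 - (1 / 4 - 1 / 8) * s ^ 2)) / ∫ s, exp (f M s))) atTop (𝓝 0) := by
    simpa only [zero_mul, Pi.div_apply] using (tendsto_pow_mul_exp_neg_rpow n (by norm_num) hκ).mul
      (tendsto_const_nhds.div hC hC0)
  refine squeeze_zero' ?_ ?_ h_bound
  · filter_upwards [eventually_ge_atTop 0] with M hM
    positivity
  · filter_upwards [hf_le, eventually_ge_atTop 0] with M hfM hM
    rw [mul_assoc]
    gcongr
    exact tilted_real_lt_abs_le (by norm_num) (by norm_num) (rpow_nonneg hM κ) (hf M) hfM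

lemma tendsto_pow_mul_cwMixing_real_compl_bulk (n : ℕ) {κ : ℝ} (hκ : 0 < κ) :
    Tendsto (fun M ↦ M ^ n * (cwMixing M).real (bulk (M ^ κ / M))ᶜ) atTop (𝓝 0) := by
  have h_tail := tendsto_pow_mul_tilted_real n hκ
    (fun M ↦ (continuous_scaledPotential M).measurable)
    ((eventually_ge_atTop 1).mono fun M hM ↦ scaledPotential_le hM)
    tendsto_integral_exp_scaledPotential (integral_exp_pos integrable_exp_neg_pow_four).ne'
  refine squeeze_zero' ?_ ?_ h_tail
  all_goals filter_upwards [eventually_gt_atTop 0] with M hM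
  · positivity
  · gcongr
    exact cwMixing_real_compl_bulk_le hM

lemma tendsto_pow_mul_quarticMixing_real_compl_bulk (n : ℕ) {κ θ : ℝ} (hκ : 0 < κ) (hκθ : κ ≤ θ) :
    Tendsto (fun M ↦ M ^ n * (quarticMixing M (M ^ θ)).real (bulk (M ^ κ / M))ᶜ)
      atTop (𝓝 0) := by
  have h_tail := tendsto_pow_mul_tilted_real n hκ (f := fun _ x ↦ -x ^ 4 / 12)
    (fun _ ↦ by fun_prop) (.of_forall fun _ ↦ neg_pow_four_le) tendsto_const_nhds
    (integral_exp_pos integrable_exp_neg_pow_four).ne'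
  refine squeeze_zero' ?_ ?_ h_tail
  all_goals filter_upwards [eventually_ge_atTop 1] with M hM
  · positivity
  · gcongr
    exact quarticMixing_real_compl_bulk_le (by linarith) (rpow_le_rpow_of_exponent_le hM hκθ)

end Tails

section Limits

lemma tendsto_rpow_div_self {κ : ℝ} (hκ : κ < 1) :
    Tendsto (fun M : ℝ ↦ M ^ κ / M) atTop (𝓝 0) := by
  refine (tendsto_rpow_neg_atTop (sub_pos.2 hκ)).congr' ?_
  filter_upwards [eventually_gt_atTop 0] with M hM
  rw [neg_sub, rpow_sub_one hM.ne']

lemma tendsto_densityError {κ : ℝ} (hκ : κ < 1 / 3) :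
    Tendsto (fun M : ℝ ↦ densityError M (M ^ κ / M)) atTop (𝓝 1) := by
  have h_exponent : Tendsto (fun M : ℝ ↦ M ^ 4 * (M ^ κ / M) ^ 6) atTop (𝓝 0) := by
    refine (tendsto_rpow_neg_atTop (show 0 < 2 - κ * 6 by linarith)).congr' ?_
    filter_upwards [eventually_gt_atTop 0] with M hM
    rw [neg_sub, rpow_sub hM, rpow_mul hM.le, rpow_ofNat, rpow_ofNat]
    field_simp
  have h_jacobian := ((tendsto_rpow_div_self (κ := κ) (by linarith)).pow 2).const_sub 1
  simpa [densityError, Pi.div_def] using h_exponent.rexp.div h_jacobian (by norm_num)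

variable {κ θ : ℝ}

lemma eventually_bulk_subset (hκ : κ < 1) :
    ∀ᶠ M : ℝ in atTop, bulk (M ^ κ / M) ⊆ Icc (-(1 / 2)) (1 / 2) := by
  filter_upwards [(tendsto_rpow_div_self hκ).eventually_le_const one_half_pos] with M hM m hm
  exact abs_le.1 ((mem_bulk.1 hm).1.trans hM)

lemma eventually_isMeanLaw_quarticMixing (hθ : θ ≤ 1) :
    ∀ᶠ M in atTop, IsMeanLaw (quarticMixing M (M ^ θ)) := by
  filter_upwards [eventually_ge_atTop 1] with M hM
  exact isMeanLaw_quarticMixing (by linarith) (rpow_le_self_of_one_le hM hθ)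

lemma eventually_cwMixing_restrict_bulk_le (hκ : κ < 1) (hκθ : κ ≤ θ) :
    ∀ᶠ M in atTop, (cwMixing M).restrict (bulk (M ^ κ / M)) ≤
      ENNReal.ofReal (densityError M (M ^ κ / M) *
        ((∫ y : ℝ, exp (-y ^ 4 / 12)) / ∫ s, exp (scaledPotential M s))) •
      quarticMixing M (M ^ θ) := by
  filter_upwards [(tendsto_rpow_div_self hκ).eventually_le_const one_half_pos,
    eventually_ge_atTop 1] with M hr hM
  have hM0 : 0 < M := by linarith
  exact cwMixing_restrict_bulk_le hM0 (by positivity) hr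
    ((div_mul_cancel₀ _ hM0.ne').trans_le (rpow_le_rpow_of_exponent_le hM hκθ))

lemma eventually_quarticMixing_restrict_bulk_le (hκ : κ < 1) (hκθ : κ ≤ θ) :
    ∀ᶠ M in atTop, (quarticMixing M (M ^ θ)).restrict (bulk (M ^ κ / M)) ≤
      ENNReal.ofReal (densityError M (M ^ κ / M) *
        ((∫ s, exp (scaledPotential M s)) / ∫ y : ℝ, exp (-y ^ 4 / 12))) • cwMixing M := by
  filter_upwards [(tendsto_rpow_div_self hκ).eventually_le_const one_half_pos,
    eventually_ge_atTop 1] with M hr hM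
  have hM0 : 0 < M := by linarith
  exact quarticMixing_restrict_bulk_le hM (by positivity) hr
    ((div_mul_cancel₀ _ hM0.ne').trans_le (rpow_le_rpow_of_exponent_le hM hκθ))

lemma exists_bulk_exponent (hθ : 0 < θ) : ∃ κ, 0 < κ ∧ κ ≤ θ ∧ κ < 1 / 3 :=
  ⟨min θ (1 / 4), lt_min hθ (by norm_num), min_le_left _ _,
    (min_le_right _ _).trans_lt (by norm_num)⟩

lemma tendsto_relEnt_cwMixing_quarticMixing (hθ0 : 0 < θ) (hθ : θ ≤ 1) {M : ℕ → ℝ}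
    (hM : Tendsto M atTop atTop) (hM4 : ∀ N, M N ^ 4 = N) :
    Tendsto (fun N ↦ relEnt (mixture (spinProduct (ι := Fin N)) (cwMixing (M N)))
      (mixture spinProduct (quarticMixing (M N) (M N ^ θ)))) atTop (𝓝 0) := by
  obtain ⟨κ, hκ0, hκθ, hκ⟩ := exists_bulk_exponent hθ0
  have hκ1 : κ < 1 := by linarith
  have hC : ∫ y : ℝ, exp (-y ^ 4 / 12) ≠ 0 := (integral_exp_pos integrable_exp_neg_pow_four).ne'
  have h_ratio : Tendsto (fun M ↦ (∫ y : ℝ, exp (-y ^ 4 / 12)) / ∫ s, exp (scaledPotential M s))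
      atTop (𝓝 1) := by
    rw [← div_self hC]
    exact tendsto_const_nhds.div tendsto_integral_exp_scaledPotential hC
  refine tendsto_relEnt_mixture_spinProduct
    (hM.eventually ((eventually_ge_atTop 1).mono fun _ ↦ isMeanLaw_cwMixing))
    (hM.eventually (eventually_isMeanLaw_quarticMixing hθ))
    (fun N ↦ measurableSet_bulk _) (hM.eventually (eventually_bulk_subset hκ1))
    (hM.eventually (eventually_cwMixing_restrict_bulk_le hκ1 hκθ)) ?_ ?_ ?_
  · simpa only [Function.comp_def, mul_one] using ((tendsto_densityError hκ).mul h_ratio).comp hM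
  · simpa only [Function.comp_def, hM4] using
      (tendsto_pow_mul_cwMixing_real_compl_bulk 4 hκ0).comp hM
  · simpa only [Function.comp_def, pow_zero, one_mul] using
      (tendsto_pow_mul_quarticMixing_real_compl_bulk 0 hκ0 hκθ).comp hM

lemma tendsto_relEnt_quarticMixing_cwMixing (hθ0 : 0 < θ) (hθ : θ ≤ 1) {M : ℕ → ℝ}
    (hM : Tendsto M atTop atTop) (hM4 : ∀ N, M N ^ 4 = N) :
    Tendsto (fun N ↦ relEnt (mixture (spinProduct (ι := Fin N)) (quarticMixing (M N) (M N ^ θ)))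
      (mixture spinProduct (cwMixing (M N)))) atTop (𝓝 0) := by
  obtain ⟨κ, hκ0, hκθ, hκ⟩ := exists_bulk_exponent hθ0
  have hκ1 : κ < 1 := by linarith
  have hC : ∫ y : ℝ, exp (-y ^ 4 / 12) ≠ 0 := (integral_exp_pos integrable_exp_neg_pow_four).ne'
  have h_ratio : Tendsto (fun M ↦ (∫ s, exp (scaledPotential M s)) / ∫ y : ℝ, exp (-y ^ 4 / 12))
      atTop (𝓝 1) := by
    rw [← div_self hC]
    exact tendsto_integral_exp_scaledPotential.div_const _
  refine tendsto_relEnt_mixture_spinProduct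
    (hM.eventually (eventually_isMeanLaw_quarticMixing hθ))
    (hM.eventually ((eventually_ge_atTop 1).mono fun _ ↦ isMeanLaw_cwMixing))
    (fun N ↦ measurableSet_bulk _) (hM.eventually (eventually_bulk_subset hκ1))
    (hM.eventually (eventually_quarticMixing_restrict_bulk_le hκ1 hκθ)) ?_ ?_ ?_
  · simpa only [Function.comp_def, mul_one] using ((tendsto_densityError hκ).mul h_ratio).comp hM
  · simpa only [Function.comp_def, hM4] using
      (tendsto_pow_mul_quarticMixing_real_compl_bulk 4 hκ0 hκθ).comp hM
  · simpa only [Function.comp_def, pow_zero, one_mul] using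
      (tendsto_pow_mul_cwMixing_real_compl_bulk 0 hκ0).comp hM

end Limits

theorem stmt_9_general
    (δ : ℝ) (hδ0 : 0 < δ) (hδ : δ ≤ 1 / 4)
    (spin : Bool → ℝ) (hspin : ∀ b, spin b = if b then 1 else -1)
    (Z : ℕ → ℝ)
    (hZ : ∀ N : ℕ, Z N = ∑ σ : Fin N → Bool,
      Real.exp (1 / (2 * N) * ∑ i, ∑ j, spin (σ i) * spin (σ j)))
    (μ : ∀ N : ℕ, (Fin N → Bool) → ℝ)
    (hμ : ∀ N σ, μ N σ =
      Real.exp (1 / (2 * N) * ∑ i, ∑ j, spin (σ i) * spin (σ j)) / Z N)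
    (f1 : ℝ → ℝ)
    (hf1 : ∀ x, f1 x = Real.exp (-x ^ 4 / 12) / ∫ y : ℝ, Real.exp (-y ^ 4 / 12))
    (ν : ∀ N : ℕ, (Fin N → Bool) → ℝ)
    (hν : ∀ N σ, ν N σ =
      ∫ t : ℝ, (∏ i, (1 / 2 : ℝ) * (1 + (if |t| ≤ (N : ℝ) ^ δ then t else 0) *
        spin (σ i) / (N : ℝ) ^ ((1 : ℝ) / 4))) * f1 t) :
    Tendsto (fun N => relEnt (μ N) (ν N)) atTop (nhds 0) ∧
      Tendsto (fun N => relEnt (ν N) (μ N)) atTop (nhds 0) := by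
  obtain rfl : spin = boolSpin := funext hspin
  have h_top : Tendsto (fun N : ℕ ↦ (N : ℝ) ^ ((1 : ℝ) / 4)) atTop atTop :=
    (tendsto_rpow_atTop (by norm_num)).comp tendsto_natCast_atTop_atTop
  have h_four (N : ℕ) : ((N : ℝ) ^ ((1 : ℝ) / 4)) ^ 4 = N := by
    simpa using rpow_inv_natCast_pow N.cast_nonneg four_ne_zero
  have h_δ (N : ℕ) : ((N : ℝ) ^ ((1 : ℝ) / 4)) ^ (4 * δ) = (N : ℝ) ^ δ := by
    rw [← rpow_mul N.cast_nonneg]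
    ring_nf
  have h_μ : ∀ᶠ N : ℕ in atTop, μ N = mixture spinProduct (cwMixing ((N : ℝ) ^ ((1 : ℝ) / 4))) := by
    filter_upwards [h_top.eventually_ge_atTop 1] with N hN
    ext σ
    rw [mixture_spinProduct_cwMixing hN ((h_four N).trans (by rw [Fintype.card_fin])), hμ, hZ]
    simp only [cwWeight, Fintype.card_fin]
  have h_ν (N : ℕ) : ν N = mixture spinProduct
      (quarticMixing ((N : ℝ) ^ ((1 : ℝ) / 4)) (((N : ℝ) ^ ((1 : ℝ) / 4)) ^ (4 * δ))) := by
    ext σ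
    simp only [hν, hf1, mixture_spinProduct_quarticMixing, spinProduct, h_δ, div_mul_eq_mul_div]
  have hδ_pos : 0 < 4 * δ := by linarith
  have hδ_le : 4 * δ ≤ 1 := by linarith
  refine ⟨(tendsto_relEnt_cwMixing_quarticMixing hδ_pos hδ_le h_top h_four).congr' ?_,
    (tendsto_relEnt_quarticMixing_cwMixing hδ_pos hδ_le h_top h_four).congr' ?_⟩
  all_goals filter_upwards [h_μ] with N hN
  all_goals rw [hN, h_ν]

/-- For the critical Curie–Weiss model (`β = 1`, `h = 0`), with `ξ` having
density `f₁(x) = exp(−x⁴/12)/∫ exp(−y⁴/12) dy`, truncated at `N^δ` (`0 < δ < 1/20`),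
and `ν_N(σ) = E[∏_i ½(1 + ξ_N σ_i / N^{1/4})]`, one has `H(μ_N|ν_N) → 0` and
`H(ν_N|μ_N) → 0` as `N → ∞`. Spins `±1` are encoded by `Bool`. -/
theorem stmt_9
    (δ : ℝ) (hδ0 : 0 < δ) (hδ : δ < 1 / 20)
    (spin : Bool → ℝ) (hspin : ∀ b, spin b = if b then 1 else -1)
    (Z : ℕ → ℝ)
    (hZ : ∀ N : ℕ, Z N = ∑ σ : Fin N → Bool,
      Real.exp (1 / (2 * N) * ∑ i, ∑ j, spin (σ i) * spin (σ j)))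
    (μ : ∀ N : ℕ, (Fin N → Bool) → ℝ)
    (hμ : ∀ N σ, μ N σ =
      Real.exp (1 / (2 * N) * ∑ i, ∑ j, spin (σ i) * spin (σ j)) / Z N)
    (f1 : ℝ → ℝ)
    (hf1 : ∀ x, f1 x = Real.exp (-x ^ 4 / 12) / ∫ y : ℝ, Real.exp (-y ^ 4 / 12))
    (ν : ∀ N : ℕ, (Fin N → Bool) → ℝ)
    (hν : ∀ N σ, ν N σ =
      ∫ t : ℝ, (∏ i, (1 / 2 : ℝ) * (1 + (if |t| ≤ (N : ℝ) ^ δ then t else 0) *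
        spin (σ i) / (N : ℝ) ^ ((1 : ℝ) / 4))) * f1 t) :
    Tendsto (fun N => relEnt (μ N) (ν N)) atTop (nhds 0) ∧
      Tendsto (fun N => relEnt (ν N) (μ N)) atTop (nhds 0) := by
  exact stmt_9_general δ hδ0 (by linarith) spin hspin Z hZ μ hμ f1 hf1 ν hν
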